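/- Let E, A_xx be M_x×M_x, A_xv be M_x×M_v, A_zv be M_z×M_v, B_x be M_x×M_u, B_z be M_z×M_u, and Φ be M_v×M_z complex matrices, with I_{M_z} − A_zv Φ invertible. Define B = B_x + A_xv Φ (I − A_zv Φ)^{-1} B_z. Then the matrix [E, B] has full row rank if and only if the matrix Ξ_∞^[c] = [[E, −B_x, −A_xv Φ],[0, −B_z, I_{M_z} − A_zv Φ]] has full row rank. -/

import Mathlib

/-!
Elimination with the invertible corner `W = I − Azv Φ` of `Ξ∞⁽ᶜ⁾` leaves its Schur complement
`[E, −Bx] + Axv Φ W⁻¹ [0, −Bz] = [E, −B]`. Rank is additive under this elimination, so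
`rank Ξ∞⁽ᶜ⁾ = rank [E, B] + Mz`.
-/

section Rank

open Matrix Module

variable {R l m n o p : Type*}

lemma finrank_prod_of_isDomain [CommRing R] [IsDomain R] (M N : Type*) [AddCommGroup M]
    [AddCommGroup N] [Module R M] [Module R N] [Module.Finite R M] [Module.Finite R N] :
    finrank R (M × N) = finrank R M + finrank R N := by
  let quotientEquiv := (LinearMap.fst R M N).quotKerEquivOfSurjective LinearMap.fst_surjective
  have finrank_ker : finrank R (LinearMap.ker (LinearMap.fst R M N)) = finrank R N := by
    rw [LinearMap.ker_fst, LinearMap.finrank_range_of_inj LinearMap.inr_injective]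
  rw [← Submodule.finrank_quotient_add_finrank (LinearMap.ker (LinearMap.fst R M N)),
    quotientEquiv.finrank_eq, finrank_ker]

lemma finrank_range_prodMap [CommRing R] [IsDomain R] {M M' N N' : Type*}
    [AddCommGroup M] [AddCommGroup M'] [AddCommGroup N] [AddCommGroup N']
    [Module R M] [Module R M'] [Module R N] [Module R N'] [Module.Finite R M] [Module.Finite R N]
    (f : M →ₗ[R] M') (g : N →ₗ[R] N') :
    finrank R (LinearMap.range (f.prodMap g)) =
      finrank R (LinearMap.range f) + finrank R (LinearMap.range g) := by
  let incl := (LinearMap.range f).subtype.prodMap (LinearMap.range g).subtype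
  have incl_injective : Function.Injective incl :=
    Subtype.val_injective.prodMap Subtype.val_injective
  have range_incl : LinearMap.range incl = LinearMap.range (f.prodMap g) := by
    simp only [incl, LinearMap.range_prodMap, Submodule.range_subtype]
  rw [← range_incl, LinearMap.finrank_range_of_inj incl_injective, finrank_prod_of_isDomain]

lemma mulVecLin_fromBlocks_zero₁₂_zero₂₁ [CommSemiring R] [Fintype m] [Fintype o]
    (A : Matrix l m R) (D : Matrix n o R) :
    (fromBlocks A 0 0 D).mulVecLin =
      (LinearEquiv.sumArrowLequivProdArrow l n R R).symm ∘ₗ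
        A.mulVecLin.prodMap D.mulVecLin ∘ₗ LinearEquiv.sumArrowLequivProdArrow m o R R := by
  refine LinearMap.ext fun v => funext ?_
  rintro (i | i) <;>
    simp [fromBlocks_mulVec, LinearEquiv.sumArrowLequivProdArrow, Equiv.sumArrowEquivProdArrow]

lemma rank_fromBlocks_zero₁₂_zero₂₁ [CommRing R] [IsDomain R] [Fintype m] [Fintype o]
    (A : Matrix l m R) (D : Matrix n o R) :
    (fromBlocks A 0 0 D).rank = A.rank + D.rank := by
  rw [rank, mulVecLin_fromBlocks_zero₁₂_zero₂₁, LinearMap.range_comp, LinearEquiv.finrank_map_eq,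
    LinearMap.range_comp_of_range_eq_top _ (LinearEquiv.range _), finrank_range_prodMap, rank, rank]

lemma rank_fromBlocks_of_isUnit₂₂ [CommRing R] [IsDomain R] [Finite l] [Fintype m] [Fintype n]
    [DecidableEq n] (A : Matrix l m R) (B : Matrix l n R) (C : Matrix n m R) {D : Matrix n n R}
    (hD : IsUnit D) :
    (fromBlocks A B C D).rank = (A - B * D⁻¹ * C).rank + Fintype.card n := by
  classical
  let := Fintype.ofFinite l
  let := hD.invertible
  rw [fromBlocks_eq_of_invertible₂₂, invOf_eq_nonsing_inv,
    rank_mul_eq_left_of_isUnit_det _ _ (by simp), rank_mul_eq_right_of_isUnit_det _ _ (by simp),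
    rank_fromBlocks_zero₁₂_zero₂₁, rank_of_isUnit D hD]

lemma fromBlocks_fromCols₁₂_fromCols₂₂ (A₁ : Matrix l m R) (A₂ : Matrix l n R)
    (B : Matrix l o R) (C₁ : Matrix p m R) (C₂ : Matrix p n R) (D : Matrix p o R) :
    fromBlocks A₁ (fromCols A₂ B) C₁ (fromCols C₂ D) =
      (fromBlocks (fromCols A₁ A₂) B (fromCols C₁ C₂) D).submatrix (Equiv.refl _)
        (Equiv.sumAssoc m n o).symm := by
  ext (i | i) (j | j | j) <;> rfl

lemma rank_fromCols_neg_right [CommRing R] [Fintype m] [Fintype n] (A : Matrix l m R)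
    (B : Matrix l n R) : (fromCols A (-B)).rank = (fromCols A B).rank := by
  classical
  let signFlip : Matrix (m ⊕ n) (m ⊕ n) R := fromBlocks 1 0 0 (-1)
  have factor : fromCols A (-B) = fromCols A B * signFlip := by
    simp [signFlip, fromCols_mul_fromBlocks]
  have isUnit_det : IsUnit signFlip.det := by
    simp [signFlip, det_neg, isUnit_one.neg.pow]
  rw [factor, rank_mul_eq_left_of_isUnit_det _ _ isUnit_det]

lemma rank_fromBlocks_fromCols_neg_of_isUnit [CommRing R] [IsDomain R] [Finite l] [Fintype m]
    [Fintype n] [Fintype o] [DecidableEq o] (E : Matrix l m R) (F : Matrix l n R)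
    (C : Matrix l o R) (G : Matrix o n R) {W : Matrix o o R} (hW : IsUnit W) :
    (fromBlocks E (fromCols (-F) (-C)) 0 (fromCols (-G) W)).rank =
      (fromCols E (F + C * W⁻¹ * G)).rank + Fintype.card o := by
  have schur : fromCols E (-F) - -C * W⁻¹ * fromCols 0 (-G) =
      fromCols E (-(F + C * W⁻¹ * G)) := by
    ext i (j | j) <;> simp [sub_eq_add_neg, add_comm]
  rw [fromBlocks_fromCols₁₂_fromCols₂₂, rank_submatrix, rank_fromBlocks_of_isUnit₂₂ _ _ _ hW,
    schur, rank_fromCols_neg_right]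

end Rank

theorem controllability_infinity_iff_structured_matrix_general
    {R x x' v z u : Type*} [CommRing R] [IsDomain R] [Fintype x] [Fintype x'] [Fintype v]
    [Fintype z] [Fintype u] [DecidableEq z]
    (E : Matrix x x' R) (Axv : Matrix x v R) (Azv : Matrix z v R)
    (Bx : Matrix x u R) (Bz : Matrix z u R) (Φ : Matrix v z R)
    (hwp : IsUnit (1 - Azv * Φ)) (B : Matrix x u R)
    (hB : B = Bx + Axv * Φ * (1 - Azv * Φ)⁻¹ * Bz) :
    (Matrix.fromCols E B).rank = Fintype.card x ↔
      (Matrix.fromBlocks E (Matrix.fromCols (-Bx) (-(Axv * Φ)))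
        0 (Matrix.fromCols (-Bz) (1 - Azv * Φ))).rank = Fintype.card x + Fintype.card z := by
  rw [rank_fromBlocks_fromCols_neg_of_isUnit E Bx (Axv * Φ) Bz hwp, ← hB, Nat.add_right_cancel_iff]

/-- **Corollary 1, condition at infinity.** Under well-posedness (`I − Azv Φ`
invertible), with `B = Bx + Axv Φ (I − Azv Φ)⁻¹ Bz`, the matrix `[E, B]` has full row
rank iff the matrix `Ξ∞⁽ᶜ⁾ = [[E, −Bx, −Axv Φ],[0, −Bz, I − Azv Φ]]` has full row
rank. -/
theorem controllability_infinity_iff_structured_matrix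
    (Mx Mv Mz Mu : ℕ)
    (E : Matrix (Fin Mx) (Fin Mx) ℂ)
    (Axv : Matrix (Fin Mx) (Fin Mv) ℂ)
    (Azv : Matrix (Fin Mz) (Fin Mv) ℂ)
    (Bx : Matrix (Fin Mx) (Fin Mu) ℂ)
    (Bz : Matrix (Fin Mz) (Fin Mu) ℂ)
    (Φ : Matrix (Fin Mv) (Fin Mz) ℂ)
    (hwp : IsUnit ((1 : Matrix (Fin Mz) (Fin Mz) ℂ) - Azv * Φ))
    (B : Matrix (Fin Mx) (Fin Mu) ℂ)
    (hB : B = Bx + Axv * Φ * ((1 : Matrix (Fin Mz) (Fin Mz) ℂ) - Azv * Φ)⁻¹ * Bz) :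
    (Matrix.fromCols E B).rank = Mx ↔
    (Matrix.fromBlocks
        E (Matrix.fromCols (-Bx) (-(Axv * Φ)))
        0 (Matrix.fromCols (-Bz) ((1 : Matrix (Fin Mz) (Fin Mz) ℂ) - Azv * Φ))).rank
      = Mx + Mz := by
  simpa only [Fintype.card_fin] using
    controllability_infinity_iff_structured_matrix_general E Axv Azv Bx Bz Φ hwp B hB
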